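/- Fix ε > 0 and an integer u ≥ 1. For each n, let A_n be a random n×(n+u) integer matrix that is ε-balanced (with laws that may depend arbitrarily on n). Then limsup_{n→∞} P(A_n is surjective) ≤ ∏_{p prime} ∏_{k=1}^{∞} (1 − p^(−k−u)), which equals ∏_{k=u+1}^{∞} ζ(k)^(−1) where ζ is the Riemann zeta function. -/

import Mathlib

open MeasureTheory Filter

/-- A probability distribution on `ℤ` is `ε`-balanced if for every prime `p` it puts mass
at most `1 - ε` on every residue class modulo `p`. -/
def IsBalanced (ε : ℝ) (ν : Measure ℤ) : Prop :=
  ∀ p : ℕ, p.Prime → ∀ r : ZMod p, ν {x : ℤ | (x : ZMod p) = r} ≤ ENNReal.ofReal (1 - ε)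

/-- The law of a random `n × m` integer matrix whose entries are independent with laws `ν i j`:
the product measure on the space of matrices (viewed as functions `Fin n → Fin m → ℤ`). -/
noncomputable def matrixLaw {n m : ℕ} (ν : Fin n → Fin m → Measure ℤ) :
    Measure (Fin n → Fin m → ℤ) :=
  Measure.pi fun i => Measure.pi fun j => ν i j

/-!
Surjectivity over `ℤ` implies surjectivity modulo every prime, so it suffices to bound the
probability of being surjective modulo each prime of a finite set. Expose the rows one at a time.
If the first `l` rows are surjective modulo `p`, the kernel of their reduction has `p ^ (m - l)`
elements, and surjectivity modulo `p` survives the next row only if that row does not annihilate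
the kernel. A union bound shows that, except with exponentially small probability, no nonzero
vector of the kernel is sparse; Fourier analysis then shows that the pairings of the next row with
the kernels are nearly equidistributed, jointly in `p`, so that the row annihilates none of them
with probability close to `∏ p, (1 - p ^ (-(m - l)))`. Multiplying these factors over the last `K`
rows, where `m - l` runs through `u + 1, …, u + K`, bounds the limsup, and then `K` and the set of
primes are sent to infinity.
-/

open scoped Topology

section EulerProduct

lemma ofReal_tprod {β : Type*} (f : β → ℝ) :
    ((∏' b, f b : ℝ) : ℂ) = ∏' b, (f b : ℂ) :=
  Function.LeftInverse.map_tprod f (g := Complex.ofRealHom) Complex.continuous_ofReal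
    Complex.continuous_re Complex.ofReal_re

lemma summable_inv_primes_pow {u : ℕ} (hu : 1 ≤ u) :
    Summable fun x : Nat.Primes × ℕ => ((x.1 : ℕ) : ℝ)⁻¹ ^ (x.2 + 1 + u) := by
  have hprimes : Summable fun p : Nat.Primes => ((p : ℕ) : ℝ)⁻¹ ^ 2 := by
    refine (Nat.Primes.summable_rpow (r := -2).2 (by norm_num)).congr fun p => ?_
    rw [Real.rpow_neg (by positivity), inv_pow]
    norm_num
  refine .of_nonneg_of_le (fun x => by positivity) (fun ⟨p, k⟩ => ?_)
    (hprimes.mul_of_nonneg summable_geometric_two (fun p => by positivity) fun k => by positivity)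
  have hp : ((p : ℕ) : ℝ)⁻¹ ≤ 1 / 2 := by
    rw [one_div]
    exact inv_anti₀ two_pos (by exact_mod_cast p.2.two_le)
  calc ((p : ℕ) : ℝ)⁻¹ ^ (k + 1 + u)
      ≤ ((p : ℕ) : ℝ)⁻¹ ^ (2 + k) :=
        pow_le_pow_of_le_one (by positivity) (by linarith) (by omega)
    _ = ((p : ℕ) : ℝ)⁻¹ ^ 2 * ((p : ℕ) : ℝ)⁻¹ ^ k := pow_add _ _ _
    _ ≤ ((p : ℕ) : ℝ)⁻¹ ^ 2 * (1 / 2) ^ k := by gcongr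

lemma multipliable_one_sub_of_summable {β : Type*} {f : β → ℝ} (hf : Summable f) :
    Multipliable fun b => 1 - f b := by
  simpa only [sub_eq_add_neg] using Real.multipliable_one_add_of_summable hf.neg

lemma multipliable_one_sub_inv_primes_pow {u : ℕ} (hu : 1 ≤ u) (p : Nat.Primes) :
    Multipliable fun k : ℕ => 1 - ((p : ℕ) : ℝ)⁻¹ ^ (k + 1 + u) :=
  multipliable_one_sub_of_summable ((summable_inv_primes_pow hu).prod_factor p)

lemma inv_riemannZeta_natCast_eq_tprod {n : ℕ} (hn : 1 < n) :
    (riemannZeta n)⁻¹ = ((∏' p : Nat.Primes, (1 - ((p : ℕ) : ℝ)⁻¹ ^ n) : ℝ) : ℂ) := by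
  have hre : 1 < (n : ℂ).re := by simpa using hn
  rw [ofReal_tprod, ← ((riemannZeta_eulerProduct_hasProd hre).inv₀
    (riemannZeta_ne_zero_of_one_lt_re hre)).tprod_eq]
  refine tprod_congr fun p => ?_
  rw [inv_inv, Complex.cpow_neg, Complex.cpow_natCast]
  push_cast
  rw [inv_pow]

lemma tprod_primes_tprod_eq_tprod_inv_riemannZeta {u : ℕ} (hu : 1 ≤ u) :
    ((∏' p : Nat.Primes, ∏' k : ℕ, (1 - ((p : ℕ) : ℝ)⁻¹ ^ (k + 1 + u)) : ℝ) : ℂ) =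
      ∏' k : ℕ, (riemannZeta ((k : ℂ) + u + 1))⁻¹ := by
  rw [← Multipliable.tprod_comm' (f := fun (p : Nat.Primes) (k : ℕ) =>
      1 - ((p : ℕ) : ℝ)⁻¹ ^ (k + 1 + u))
    (multipliable_one_sub_of_summable (summable_inv_primes_pow hu))
    (multipliable_one_sub_inv_primes_pow hu)
    fun k => multipliable_one_sub_of_summable
      ((summable_inv_primes_pow hu).prod_symm.prod_factor k), ofReal_tprod]
  refine tprod_congr fun k => ?_
  rw [← inv_riemannZeta_natCast_eq_tprod (by omega)]
  push_cast
  ring_nf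

lemma le_tprod_primes_tprod {u : ℕ} (hu : 1 ≤ u) {x : ℝ}
    (hx : ∀ (P : Finset Nat.Primes) (K : ℕ),
      x ≤ ∏ k ∈ Finset.range K, ∏ p ∈ P, (1 - ((p : ℕ) : ℝ)⁻¹ ^ (k + 1 + u))) :
    x ≤ ∏' p : Nat.Primes, ∏' k : ℕ, (1 - ((p : ℕ) : ℝ)⁻¹ ^ (k + 1 + u)) := by
  have hprod := (multipliable_one_sub_of_summable (summable_inv_primes_pow hu)).hasProd
    |>.prod_fiberwise fun p => (multipliable_one_sub_inv_primes_pow hu p).hasProd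
  rw [hprod.tprod_eq]
  refine ge_of_tendsto' hprod fun P => ge_of_tendsto'
    (tendsto_finsetProd P fun p _ =>
      (multipliable_one_sub_inv_primes_pow hu p).hasProd.tendsto_prod_nat) fun K => ?_
  rw [Finset.prod_comm]
  exact hx P K

end EulerProduct

section UnitVectors

variable {E : Type*} [NormedAddCommGroup E] [InnerProductSpace ℝ E]

lemma exists_forall_inner_le_of_finite {T : Set E} (hT : T.Finite) (hnorm : ∀ t ∈ T, ‖t‖ = 1) :
    ∃ κ < (1 : ℝ), ∀ s ∈ T, ∀ t ∈ T, s ≠ t → inner ℝ s t ≤ κ := by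
  have hev : ∀ᶠ κ in 𝓝[<] (1 : ℝ), ∀ s ∈ T, ∀ t ∈ T, s ≠ t → inner ℝ s t ≤ κ := by
    refine (eventually_all_finite hT).2 fun s hs => (eventually_all_finite hT).2 fun t ht => ?_
    by_cases hst : s = t
    · exact .of_forall fun κ hne => absurd hst hne
    · have hlt := (inner_lt_one_iff_real_of_norm_eq_one (hnorm s hs) (hnorm t ht)).2 hst
      filter_upwards [Ioo_mem_nhdsLT hlt] with κ hκ _ using hκ.1.le
  obtain ⟨κ, hκ, hκ1⟩ := (hev.and self_mem_nhdsWithin).exists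
  exact ⟨κ, hκ1, hκ⟩

variable [CompleteSpace E] {Ω : Type*} [MeasurableSpace Ω]

-- Two independent copies of `f` agree with probability at most `q`, and otherwise their inner
-- product is at most `κ`; the mean of that inner product is the left-hand side.
lemma sq_norm_integral_le_of_inner_le {μ : Measure Ω} [IsProbabilityMeasure μ] {f : Ω → E}
    (hf : StronglyMeasurable f) (hnorm : ∀ ω, ‖f ω‖ = 1) {κ q : ℝ} (hκ : κ ≤ 1)
    (hinner : ∀ ω ω', f ω ≠ f ω' → inner ℝ (f ω) (f ω') ≤ κ)
    (hq : ∀ ω', μ.real {ω | f ω = f ω'} ≤ q) :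
    ‖∫ ω, f ω ∂μ‖ ^ 2 ≤ κ + (1 - κ) * q := by
  have hint : Integrable f μ :=
    .of_bound hf.aestronglyMeasurable 1 (.of_forall fun ω => (hnorm ω).le)
  have hpoint : ∀ ω', inner ℝ (∫ ω, f ω ∂μ) (f ω') ≤ κ + (1 - κ) * q := fun ω' => by
    have hS : MeasurableSet {ω | f ω = f ω'} :=
      hf.measurableSet_eq_fun stronglyMeasurable_const
    have hind : Integrable (fun ω => (1 - κ) * {ω | f ω = f ω'}.indicator 1 ω) μ :=
      ((integrable_const (1 : ℝ)).indicator hS).const_mul _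
    calc inner ℝ (∫ ω, f ω ∂μ) (f ω')
        = ∫ ω, inner ℝ (f ω') (f ω) ∂μ := by rw [integral_inner hint, real_inner_comm]
      _ ≤ ∫ ω, κ + (1 - κ) * {ω | f ω = f ω'}.indicator 1 ω ∂μ := by
        refine integral_mono (hint.const_inner _) ((integrable_const κ).add hind)
          fun ω => ?_
        by_cases h : f ω = f ω'
        · simp [h, hnorm]
        · simpa [h, real_inner_comm] using hinner ω ω' h
      _ = κ + (1 - κ) * μ.real {ω | f ω = f ω'} := by
        rw [integral_add (integrable_const κ) hind, integral_const_mul,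
          integral_indicator_one hS, integral_const, probReal_univ, one_smul]
      _ ≤ κ + (1 - κ) * q := by
        linarith [mul_le_mul_of_nonneg_left (hq ω') (sub_nonneg.2 hκ)]
  calc ‖∫ ω, f ω ∂μ‖ ^ 2 = ∫ ω', inner ℝ (∫ ω, f ω ∂μ) (f ω') ∂μ := by
        rw [integral_inner hint, real_inner_self_eq_norm_sq]
    _ ≤ ∫ _, κ + (1 - κ) * q ∂μ :=
        integral_mono (hint.const_inner _) (integrable_const _) hpoint
    _ = κ + (1 - κ) * q := by simp

end UnitVectors

section Balanced

variable {ε : ℝ} {ν : Measure ℤ} [IsProbabilityMeasure ν]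

lemma IsBalanced.le_one (hν : IsBalanced ε ν) : ε ≤ 1 := by
  by_contra! hε
  have hnull : ∀ r : ZMod 2, ν {x : ℤ | (x : ZMod 2) = r} = 0 := fun r =>
    le_zero_iff.1 ((hν 2 Nat.prime_two r).trans_eq (ENNReal.ofReal_of_nonpos (by linarith)))
  have hcover : (⋃ r : ZMod 2, {x : ℤ | (x : ZMod 2) = r}) = Set.univ :=
    Set.iUnion_eq_univ_iff.2 fun x => ⟨x, rfl⟩
  have huniv : ν Set.univ = 0 := hcover ▸ measure_iUnion_null hnull
  exact one_ne_zero (measure_univ.symm.trans huniv)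

lemma IsBalanced.measureReal_le (hν : IsBalanced ε ν) (p : ℕ) [Fact p.Prime] (r : ZMod p) :
    ν.real {x : ℤ | (x : ZMod p) = r} ≤ 1 - ε :=
  ENNReal.toReal_le_of_le_ofReal (sub_nonneg.2 hν.le_one) (hν p Fact.out r)

end Balanced

section PrimeChar

variable {ι : Type*} [Fintype ι] (p : ι → ℕ)

/-- The character `y ↦ ∏ i, exp (2πi y zᵢ / pᵢ)` of `ℤ` attached to a family of frequencies
`zᵢ ∈ ℤ/pᵢ`. It detects residues modulo several primes at once. -/
noncomputable def primeChar [∀ i, NeZero (p i)] (z : ∀ i, ZMod (p i)) : AddChar ℤ ℂ :=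
  ∏ i, (ZMod.stdAddChar.mulShift (z i)).compAddMonoidHom (Int.castAddHom (ZMod (p i)))

lemma primeChar_apply [∀ i, NeZero (p i)] (z : ∀ i, ZMod (p i)) (y : ℤ) :
    primeChar p z y = ∏ i, ZMod.stdAddChar ((y : ZMod (p i)) * z i) := by
  simp [primeChar, AddChar.prod_apply, AddChar.mulShift_apply, mul_comm]

lemma norm_primeChar [∀ i, NeZero (p i)] (z : ∀ i, ZMod (p i)) (y : ℤ) :
    ‖primeChar p z y‖ = 1 := by
  rw [primeChar_apply, norm_prod]
  exact Finset.prod_eq_one fun i _ => AddChar.norm_apply _ _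

lemma finite_range_primeChar [∀ i, NeZero (p i)] :
    (Set.range fun x : (∀ i, ZMod (p i)) × ℤ => primeChar p x.1 x.2).Finite := by
  refine (Set.finite_range fun x : (∀ i, ZMod (p i)) × (∀ i, ZMod (p i)) =>
    ∏ i, (ZMod.stdAddChar (x.2 i * x.1 i) : ℂ)).subset ?_
  rintro _ ⟨⟨z, y⟩, rfl⟩
  exact ⟨(z, fun i => (y : ZMod (p i))), (primeChar_apply p z y).symm⟩

variable {p} [∀ i, Fact (p i).Prime]

-- Raising to the power `∏ j ≠ i, pⱼ` kills every factor of the character except the `i`-th.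
lemma intCast_eq_zero_of_primeChar_eq_one
    (hp : Function.Injective p) {z : ∀ i, ZMod (p i)} {y : ℤ} (hy : primeChar p z y = 1) {i : ι}
    (hi : z i ≠ 0) : (y : ZMod (p i)) = 0 := by
  classical
  set M : ℕ := ∏ j ∈ Finset.univ.erase i, p j with hM
  have hMi : (M : ZMod (p i)) ≠ 0 := by
    rw [hM, Nat.cast_prod, Finset.prod_ne_zero_iff]
    intro j hj hzero
    exact (Finset.ne_of_mem_erase hj) (hp ((Nat.prime_dvd_prime_iff_eq Fact.out Fact.out).1
      ((ZMod.natCast_eq_zero_iff _ _).1 hzero))).symm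
  have hMj : ∀ j ≠ i, (M : ZMod (p j)) = 0 := fun j hj =>
    (ZMod.natCast_eq_zero_iff _ _).2 (Finset.dvd_prod_of_mem p (by simpa using hj))
  have hone : primeChar p z (M * y) = 1 := by
    rw [← nsmul_eq_mul, AddChar.map_nsmul_eq_pow, hy, one_pow]
  rw [primeChar_apply, Finset.prod_eq_single i (fun j _ hj => by simp [hMj j hj]) (by simp),
    ← AddChar.map_zero_eq_one (ZMod.stdAddChar (N := p i)),
    ZMod.injective_stdAddChar.eq_iff] at hone
  simpa [hMi, hi] using hone

lemma IsBalanced.measureReal_primeChar_eq_le (hp : Function.Injective p) {ε : ℝ}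
    {ν : Measure ℤ} [IsProbabilityMeasure ν]
    (hν : IsBalanced ε ν) {z : ∀ i, ZMod (p i)} (hz : z ≠ 0) (y' : ℤ) :
    ν.real {y | primeChar p z y = primeChar p z y'} ≤ 1 - ε := by
  obtain ⟨i, hi⟩ := Function.ne_iff.1 hz
  refine (measureReal_mono fun y hy => ?_).trans (hν.measureReal_le (p i) (y' : ZMod (p i)))
  have hsub : primeChar p z (y - y') = 1 := by
    rw [AddChar.map_sub_eq_div, show primeChar p z y = primeChar p z y' from hy, div_self]
    exact norm_ne_zero_iff.1 (by rw [norm_primeChar]; exact one_ne_zero)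
  simpa [sub_eq_zero] using intCast_eq_zero_of_primeChar_eq_one hp hsub hi

lemma exists_forall_norm_integral_primeChar_le
    (hp : Function.Injective p) {ε : ℝ} (hε : 0 < ε) :
    ∃ ρ : ℝ, 0 ≤ ρ ∧ ρ < 1 ∧ ∀ (ν : Measure ℤ) [IsProbabilityMeasure ν], IsBalanced ε ν →
      ∀ z ≠ 0, ‖∫ y, primeChar p z y ∂ν‖ ≤ ρ := by
  obtain ⟨κ, hκ1, hκ⟩ := exists_forall_inner_le_of_finite (finite_range_primeChar p)
    (by rintro _ ⟨x, rfl⟩; exact norm_primeChar p _ _)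
  refine ⟨√(κ + (1 - κ) * (1 - ε)), Real.sqrt_nonneg _, ?_, fun ν _ hν z hz => ?_⟩
  · rw [Real.sqrt_lt' one_pos]
    nlinarith
  · exact Real.le_sqrt_of_sq_le (sq_norm_integral_le_of_inner_le .of_discrete
      (norm_primeChar p z) hκ1.le (fun y y' => hκ _ ⟨(z, y), rfl⟩ _ ⟨(z, y'), rfl⟩)
      (hν.measureReal_primeChar_eq_le hp hz))

end PrimeChar

section RowCharacterSums

variable {κ : Type*} [Fintype κ]

lemma addChar_sum {A M : Type*} [AddCommMonoid A] [CommMonoid M] (ψ : AddChar A M) (f : κ → A) :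
    ψ (∑ j, f j) = ∏ j, ψ (f j) :=
  map_prod ψ.toMonoidHom (fun j => Multiplicative.ofAdd (f j)) Finset.univ

/-- Every nonzero vector of the submodule `W` has at least `s` nonzero coordinates, i.e. the linear
code `W` has minimum distance at least `s`. -/
def HasMinWeight {R : Type*} [Semiring R] [DecidableEq R] (s : ℕ) (W : Submodule R (κ → R)) :
    Prop :=
  ∀ w ∈ W, w ≠ 0 → s ≤ hammingNorm w

section Expansion

variable {q : ℕ} (W : Submodule (ZMod q) (κ → ZMod q))

/-- The Fourier coefficient at `w ∈ W` of the indicator that a vector does not annihilate `W`. -/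
noncomputable def nonannihilatorCoeff (w : W) : ℂ :=
  (if w = 0 then 1 else 0) - (Nat.card W : ℂ)⁻¹

lemma ite_exists_dotProduct_ne_zero_eq_sum [NeZero q] [Fintype W] (x : κ → ZMod q)
    [Decidable (∃ w ∈ W, x ⬝ᵥ w ≠ 0)] :
    (if ∃ w ∈ W, x ⬝ᵥ w ≠ 0 then 1 else 0 : ℂ) =
      ∑ w : W, nonannihilatorCoeff W w * ZMod.stdAddChar (x ⬝ᵥ (w : κ → ZMod q)) := by
  classical
  let χ : AddChar W ℂ := ZMod.stdAddChar.compAddMonoidHom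
    ((dotProductBilin (ZMod q) (ZMod q) x).comp W.subtype).toAddMonoidHom
  have hχ : ∀ w : W, χ w = ZMod.stdAddChar (x ⬝ᵥ (w : κ → ZMod q)) := fun w => rfl
  have hχ_zero : χ = 0 ↔ ∀ w ∈ W, x ⬝ᵥ w = 0 := by
    simp only [DFunLike.ext_iff, AddChar.zero_apply, hχ, Subtype.forall]
    refine forall₂_congr fun w hw => ?_
    rw [← AddChar.map_zero_eq_one (ZMod.stdAddChar (N := q)), ZMod.injective_stdAddChar.eq_iff]
  calc (if ∃ w ∈ W, x ⬝ᵥ w ≠ 0 then 1 else 0 : ℂ)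
      = χ 0 - (Nat.card W : ℂ)⁻¹ * ∑ w, χ w := by
        rw [AddChar.sum_eq_ite, AddChar.map_zero_eq_one, Nat.card_eq_fintype_card]
        by_cases h : χ = 0
        · simpa [h] using hχ_zero.1 h
        · simpa [h] using hχ_zero.not.1 h
    _ = ∑ w : W, nonannihilatorCoeff W w * ZMod.stdAddChar (x ⬝ᵥ (w : κ → ZMod q)) := by
        simp only [nonannihilatorCoeff, sub_mul, Finset.sum_sub_distrib, ← hχ, Finset.mul_sum,
          ite_mul, one_mul, zero_mul, Finset.sum_ite_eq', Finset.mem_univ, if_true]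

lemma sum_norm_nonannihilatorCoeff_le_two [Fintype W] : ∑ w, ‖nonannihilatorCoeff W w‖ ≤ 2 := by
  classical
  calc ∑ w, ‖nonannihilatorCoeff W w‖
      ≤ ∑ w : W, ((if w = 0 then 1 else 0) + (Nat.card W : ℝ)⁻¹) := by
        refine Finset.sum_le_sum fun w _ => (norm_sub_le _ _).trans_eq ?_
        split_ifs <;> simp
    _ = 2 := by
        rw [Finset.sum_add_distrib, Finset.sum_ite_eq' Finset.univ 0]
        simp [one_add_one_eq_two]

end Expansion

variable {ι : Type*} [Fintype ι] {p : ι → ℕ} {ν : κ → Measure ℤ} [∀ j, IsProbabilityMeasure (ν j)]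

lemma integral_prod_stdAddChar_dotProduct [∀ i, NeZero (p i)] (w : ∀ i, κ → ZMod (p i)) :
    ∫ r, ∏ i, (ZMod.stdAddChar (Int.cast ∘ r ⬝ᵥ w i) : ℂ) ∂Measure.pi ν =
      ∏ j, ∫ y, primeChar p (fun i => w i j) y ∂ν j := by
  rw [← integral_fintype_prod_eq_prod]
  refine integral_congr_ae (.of_forall fun r => ?_)
  simp only [primeChar_apply, dotProduct, addChar_sum, Function.comp_apply]
  exact Finset.prod_comm

lemma norm_integral_prod_stdAddChar_dotProduct_le [∀ i, NeZero (p i)] {ρ : ℝ}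
    (hρ : ∀ j, ∀ z ≠ 0, ‖∫ y, primeChar p z y ∂ν j‖ ≤ ρ) (w : ∀ i, κ → ZMod (p i)) (i : ι) :
    ‖∫ r, ∏ i, (ZMod.stdAddChar (Int.cast ∘ r ⬝ᵥ w i) : ℂ) ∂Measure.pi ν‖ ≤
      ρ ^ hammingNorm (w i) := by
  rw [integral_prod_stdAddChar_dotProduct, norm_prod, hammingNorm, ← Finset.prod_const,
    Finset.prod_filter]
  refine Finset.prod_le_prod (fun j _ => norm_nonneg _) fun j _ => ?_
  split_ifs with hj
  · exact hρ j _ fun hz => hj (congrFun hz i)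
  · simpa using norm_integral_le_of_norm_le_const (μ := ν j)
      (.of_forall fun y => (norm_primeChar p (fun i => w i j) y).le)

lemma prod_nonannihilatorCoeff_zero (W : ∀ i, Submodule (ZMod (p i)) (κ → ZMod (p i))) :
    ∏ i, nonannihilatorCoeff (W i) 0 = ((∏ i, (1 - (Nat.card (W i) : ℝ)⁻¹) : ℝ) : ℂ) := by
  simp [nonannihilatorCoeff]

lemma measureReal_exists_dotProduct_ne_zero_eq_sum [∀ i, NeZero (p i)]
    (W : ∀ i, Submodule (ZMod (p i)) (κ → ZMod (p i))) [∀ i, Fintype (W i)]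
    [DecidableEq ι] :
    ((Measure.pi ν).real {r | ∀ i, ∃ w ∈ W i, Int.cast ∘ r ⬝ᵥ w ≠ 0} : ℂ) =
      ∑ w : ∀ i, W i, (∏ i, nonannihilatorCoeff (W i) (w i)) *
        ∫ r, ∏ i, (ZMod.stdAddChar (Int.cast ∘ r ⬝ᵥ (w i : κ → ZMod (p i))) : ℂ)
          ∂Measure.pi ν := by
  classical
  set S : Set (κ → ℤ) := {r | ∀ i, ∃ w ∈ W i, Int.cast ∘ r ⬝ᵥ w ≠ 0}
  have hS : ∀ r, S.indicator (1 : (κ → ℤ) → ℂ) r = ∑ w : ∀ i, W i,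
      (∏ i, nonannihilatorCoeff (W i) (w i)) *
        ∏ i, ZMod.stdAddChar (Int.cast ∘ r ⬝ᵥ (w i : κ → ZMod (p i))) := fun r => by
    simp only [← Finset.prod_mul_distrib]
    rw [← Fintype.prod_sum fun i (w : W i) => nonannihilatorCoeff (W i) w *
      ZMod.stdAddChar (Int.cast ∘ r ⬝ᵥ (w : κ → ZMod (p i)))]
    simp only [← ite_exists_dotProduct_ne_zero_eq_sum]
    rw [Finset.prod_ite_zero]
    simp [Set.indicator_apply, S]
  calc ((Measure.pi ν).real S : ℂ) = ∫ r, S.indicator 1 r ∂Measure.pi ν := by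
        rw [integral_indicator .of_discrete]; simp
    _ = _ := by
        simp only [hS]
        rw [integral_finsetSum]
        · simp only [integral_const_mul]
        · refine fun w _ => (Integrable.of_bound (C := 1)
            StronglyMeasurable.of_discrete.aestronglyMeasurable
            (.of_forall fun r => ?_)).const_mul _
          simp [norm_prod, AddChar.norm_apply]

lemma measureReal_exists_dotProduct_ne_zero_le [∀ i, NeZero (p i)] {ρ : ℝ} (hρ0 : 0 ≤ ρ)
    (hρ1 : ρ ≤ 1) (hρ : ∀ j, ∀ z ≠ 0, ‖∫ y, primeChar p z y ∂ν j‖ ≤ ρ) {s : ℕ}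
    {W : ∀ i, Submodule (ZMod (p i)) (κ → ZMod (p i))} (hW : ∀ i, HasMinWeight s (W i)) :
    (Measure.pi ν).real {r | ∀ i, ∃ w ∈ W i, Int.cast ∘ r ⬝ᵥ w ≠ 0} ≤
      ∏ i, (1 - (Nat.card (W i) : ℝ)⁻¹) + 2 ^ Fintype.card ι * ρ ^ s := by
  classical
  let c : (∀ i, W i) → ℂ := fun w => ∏ i, nonannihilatorCoeff (W i) (w i)
  let I : (∀ i, W i) → ℂ := fun w =>
    ∫ r, ∏ i, (ZMod.stdAddChar (Int.cast ∘ r ⬝ᵥ (w i : κ → ZMod (p i))) : ℂ) ∂Measure.pi ν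
  have hI : ∀ w, ‖I w - if w = 0 then 1 else 0‖ ≤ ρ ^ s := fun w => by
    by_cases hw : w = 0
    · simpa [hw, I] using pow_nonneg hρ0 s
    · obtain ⟨i, hi⟩ := Function.ne_iff.1 hw
      simpa [hw] using (norm_integral_prod_stdAddChar_dotProduct_le hρ (fun i => (w i).1) i).trans
        (pow_le_pow_of_le_one hρ0 hρ1 (hW i _ (w i).2 (by simpa using hi)))
  have hc : ∑ w, ‖c w‖ ≤ 2 ^ Fintype.card ι := by
    simp only [c, norm_prod]
    rw [← Fintype.prod_sum fun i w => ‖nonannihilatorCoeff (W i) w‖]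
    exact (Finset.prod_le_prod (fun i _ => by positivity)
      fun i _ => sum_norm_nonannihilatorCoeff_le_two (W i)).trans_eq (by simp)
  have hdiff : ((Measure.pi ν).real {r | ∀ i, ∃ w ∈ W i, Int.cast ∘ r ⬝ᵥ w ≠ 0} : ℂ) -
      ((∏ i, (1 - (Nat.card (W i) : ℝ)⁻¹) : ℝ) : ℂ) =
        ∑ w, c w * (I w - if w = 0 then 1 else 0) := by
    rw [measureReal_exists_dotProduct_ne_zero_eq_sum, ← prod_nonannihilatorCoeff_zero]
    simp [mul_sub, c, I]
  rw [← sub_le_iff_le_add']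
  refine (le_abs_self _).trans ?_
  rw [← Real.norm_eq_abs, ← Complex.norm_real, Complex.ofReal_sub, hdiff]
  calc ‖∑ w, c w * (I w - if w = 0 then 1 else 0)‖
      ≤ ∑ w, ‖c w‖ * ρ ^ s := norm_sum_le_of_le _ fun w _ =>
        (norm_mul_le _ _).trans (mul_le_mul_of_nonneg_left (hI w) (norm_nonneg _))
    _ ≤ 2 ^ Fintype.card ι * ρ ^ s := by
        rw [← Finset.sum_mul]
        exact mul_le_mul_of_nonneg_right hc (pow_nonneg hρ0 s)

end RowCharacterSums

section PiRows

variable {n : ℕ} {α : Type*} [MeasurableSpace α]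
  {μ : Fin (n + 1) → Measure α} [∀ i, IsProbabilityMeasure (μ i)]

lemma measureReal_pi_le_mul (k : Fin (n + 1)) {s : Set (Fin (n + 1) → α)} {t : Set (Fin n → α)}
    (hs : MeasurableSet s) (ht : MeasurableSet t) {c : ℝ} (hc : 0 ≤ c)
    (hst : ∀ f ∈ s, k.removeNth f ∈ t)
    (hslice : ∀ g ∈ t, (μ k).real {x | k.insertNth (α := fun _ => α) x g ∈ s} ≤ c) :
    (Measure.pi μ).real s ≤ c * (Measure.pi fun i => μ (k.succAbove i)).real t := by
  let e := MeasurableEquiv.piFinSuccAbove (fun _ => α) k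
  have he : MeasurePreserving e.symm _ (Measure.pi μ) :=
    (measurePreserving_piFinSuccAbove μ k).symm e
  refine ENNReal.toReal_le_of_le_ofReal (by positivity) ?_
  rw [ENNReal.ofReal_mul hc, ofReal_measureReal, ← he.measure_preimage hs.nullMeasurableSet,
    Measure.prod_apply_symm (e.symm.measurable hs), ← lintegral_indicator_const ht]
  refine lintegral_mono fun g => ?_
  by_cases hg : g ∈ t
  · rw [Set.indicator_of_mem hg]
    exact (ENNReal.le_ofReal_iff_toReal_le (measure_ne_top _ _) hc).2 (hslice g hg)
  · have hempty : (fun x => (x, g)) ⁻¹' (e.symm ⁻¹' s) = ∅ :=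
      Set.eq_empty_of_forall_notMem fun x hx =>
        hg (by simpa [e, Fin.insertNthEquiv] using! hst _ hx)
    simp [hempty]

lemma measureReal_pi_le_of_slice_le (k : Fin (n + 1)) {s : Set (Fin (n + 1) → α)}
    (hs : MeasurableSet s) {c : ℝ} (hc : 0 ≤ c)
    (hslice : ∀ g, (μ k).real {x | k.insertNth (α := fun _ => α) x g ∈ s} ≤ c) :
    (Measure.pi μ).real s ≤ c := by
  simpa using measureReal_pi_le_mul k hs .univ hc (fun f _ => Set.mem_univ _) fun g _ => hslice g

end PiRows

section SparseVectors

section Counting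

variable {κ β : Type*} [Fintype κ] [DecidableEq κ] [DecidableEq β] [Zero β]

lemma hammingNorm_update_zero_lt {w : κ → β} {k : κ} (hk : w k ≠ 0) :
    hammingNorm (Function.update w k 0) < hammingNorm w := by
  refine Finset.card_lt_card (Finset.ssubset_iff_subset_ne.2
    ⟨Finset.monotone_filter_right _ fun j _ hj => ?_, fun h => ?_⟩)
  · exact fun hj' => hj (by by_cases h : j = k <;> simp [h, hj'])
  · simpa [hk] using Finset.ext_iff.1 h k

lemma card_hammingNorm_le_le [Nonempty κ] [Fintype β] (s : ℕ) :
    Fintype.card {w : κ → β // hammingNorm w ≤ s} ≤ (Fintype.card κ * Fintype.card β) ^ s := by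
  induction s with
  | zero => simp
  | succ s ih =>
    have hupdate : ∀ w : {w : κ → β // hammingNorm w ≤ s + 1},
        ∃ x : (κ × β) × {w : κ → β // hammingNorm w ≤ s},
          Function.update x.2.1 x.1.1 x.1.2 = w := by
      rintro ⟨w, hw⟩
      obtain ⟨k, hk⟩ : ∃ k, hammingNorm (Function.update w k 0) ≤ s := by
        rcases eq_or_ne w 0 with rfl | hw0
        · obtain ⟨k⟩ := ‹Nonempty κ›
          exact ⟨k, by simp [Function.update_zero]⟩
        · obtain ⟨k, hk⟩ := Function.ne_iff.1 hw0
          exact ⟨k, Nat.le_of_lt_succ ((hammingNorm_update_zero_lt hk).trans_le hw)⟩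
      exact ⟨((k, w k), ⟨_, hk⟩), by simp⟩
    choose g hg using hupdate
    refine (Fintype.card_le_of_injective g fun w w' h => Subtype.ext ?_).trans ?_
    · rw [← hg, h, hg]
    · rw [Fintype.card_prod, Fintype.card_prod, pow_succ']
      exact Nat.mul_le_mul_left _ ih

end Counting

variable {p : ℕ} [Fact p.Prime] {ε : ℝ} {m : ℕ}

lemma measureReal_dotProduct_eq_zero_le {ν : Fin m → Measure ℤ} [∀ j, IsProbabilityMeasure (ν j)]
    (hν : ∀ j, IsBalanced ε (ν j)) {w : Fin m → ZMod p} (hw : w ≠ 0) :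
    (Measure.pi ν).real {r | Int.cast ∘ r ⬝ᵥ w = 0} ≤ 1 - ε := by
  obtain ⟨k, hk⟩ := Function.ne_iff.1 hw
  obtain _ | m := m
  · exact k.elim0
  refine measureReal_pi_le_of_slice_le k .of_discrete (sub_nonneg.2 (hν k).le_one) fun g => ?_
  refine (measureReal_mono fun x hx => ?_).trans
    ((hν k).measureReal_le p (-(∑ j, (g j : ZMod p) * w (k.succAbove j)) / w k))
  rw [Set.mem_ofPred_eq, eq_div_iff hk, ← add_eq_zero_iff_eq_neg]
  simpa [dotProduct, Fin.sum_univ_succAbove _ k] using hx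

end SparseVectors

section Reduction

variable {l m : ℕ} {p : ℕ}

/-- The linear map over `ℤ/p` given by the reduction modulo `p` of an integer matrix. -/
def modMap (p : ℕ) (A : Fin l → Fin m → ℤ) : (Fin m → ZMod p) →ₗ[ZMod p] (Fin l → ZMod p) :=
  ((Matrix.of A).map Int.cast).mulVecLin

lemma modMap_apply (A : Fin l → Fin m → ℤ) (w : Fin m → ZMod p) (i : Fin l) :
    modMap p A w i = Int.cast ∘ A i ⬝ᵥ w :=
  rfl

lemma surjective_modMap_of_surjective_mulVecLin {A : Fin l → Fin m → ℤ}
    (hA : Function.Surjective (Matrix.of A).mulVecLin) : Function.Surjective (modMap p A) := by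
  intro b
  obtain ⟨v, hv⟩ := hA fun i => (ZMod.intCast_surjective (b i)).choose
  refine ⟨Int.cast ∘ v, funext fun i => ?_⟩
  rw [← (ZMod.intCast_surjective (b i)).choose_spec, ← congrFun hv i]
  simp [modMap_apply, Matrix.mulVec, dotProduct]

lemma surjective_modMap_tail {A : Fin (l + 1) → Fin m → ℤ}
    (hA : Function.Surjective (modMap p A)) : Function.Surjective (modMap p (Fin.tail A)) := by
  intro b
  obtain ⟨w, hw⟩ := hA (Fin.cons 0 b)
  exact ⟨w, funext fun i => (congrFun hw i.succ).trans (Fin.cons_succ _ _ i)⟩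

lemma exists_mem_ker_modMap_dotProduct_ne_zero [Nontrivial (ZMod p)] {r : Fin m → ℤ}
    {A : Fin l → Fin m → ℤ} (hA : Function.Surjective (modMap p (Fin.cons r A : Fin (l + 1) → _))) :
    ∃ w ∈ LinearMap.ker (modMap p A), Int.cast ∘ r ⬝ᵥ w ≠ 0 := by
  obtain ⟨w, hw⟩ := hA (Fin.cons 1 0)
  have hr : Int.cast ∘ r ⬝ᵥ w = 1 := congrFun hw 0
  exact ⟨w, funext fun i => congrFun hw i.succ, by simp [hr]⟩

lemma natCard_ker_modMap [Fact p.Prime] {A : Fin l → Fin m → ℤ}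
    (hA : Function.Surjective (modMap p A)) :
    Nat.card (LinearMap.ker (modMap p A)) = p ^ (m - l) := by
  have hrank := (modMap p A).finrank_range_add_finrank_ker
  rw [LinearMap.range_eq_top.2 hA, finrank_top, Module.finrank_fin_fun,
    Module.finrank_fin_fun] at hrank
  rw [Module.natCard_eq_pow_finrank (K := ZMod p), Nat.card_zmod]
  congr
  omega

end Reduction

section Matrices

variable {l m : ℕ} {ε : ℝ}

instance matrixLaw.instIsProbabilityMeasure {ν : Fin l → Fin m → Measure ℤ}
    [∀ i j, IsProbabilityMeasure (ν i j)] :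
    IsProbabilityMeasure (matrixLaw ν) := by
  unfold matrixLaw
  infer_instance

section SinglePrime

variable {p : ℕ} [Fact p.Prime] {ν : Fin l → Fin m → Measure ℤ}
  [∀ i j, IsProbabilityMeasure (ν i j)]

lemma measureReal_mem_ker_modMap_le (hν : ∀ i j, IsBalanced ε (ν i j)) {w : Fin m → ZMod p}
    (hw : w ≠ 0) : (matrixLaw ν).real {A | w ∈ LinearMap.ker (modMap p A)} ≤ (1 - ε) ^ l := by
  have hset : {A : Fin l → Fin m → ℤ | w ∈ LinearMap.ker (modMap p A)} =
      Set.univ.pi fun _ => {r | Int.cast ∘ r ⬝ᵥ w = 0} := by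
    ext A
    simp [funext_iff, modMap_apply]
  rw [hset, Measure.real, matrixLaw, Measure.pi_pi, ENNReal.toReal_prod]
  exact (Finset.prod_le_prod (fun _ _ => ENNReal.toReal_nonneg)
    fun i _ => measureReal_dotProduct_eq_zero_le (hν i) hw).trans_eq (by simp)

lemma measureReal_not_hasMinWeight_ker_modMap_le [NeZero m] (hε : ε ≤ 1)
    (hν : ∀ i j, IsBalanced ε (ν i j)) (s : ℕ) :
    (matrixLaw ν).real {A | ¬ HasMinWeight s (LinearMap.ker (modMap p A))} ≤
      (m * p : ℝ) ^ s * (1 - ε) ^ l := by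
  let T : Finset (Fin m → ZMod p) := {w | hammingNorm w ≤ s ∧ w ≠ 0}
  have hT : (T.card : ℝ) ≤ (m * p : ℝ) ^ s := by
    have hcard := card_hammingNorm_le_le (κ := Fin m) (β := ZMod p) s
    rw [Fintype.card_subtype, Fintype.card_fin, ZMod.card] at hcard
    exact_mod_cast (Finset.card_le_card (Finset.monotone_filter_right _
      fun w _ (h : hammingNorm w ≤ s ∧ w ≠ 0) => h.1)).trans hcard
  have hcover : {A : Fin l → Fin m → ℤ | ¬ HasMinWeight s (LinearMap.ker (modMap p A))} ⊆
      ⋃ w ∈ T, {A | w ∈ LinearMap.ker (modMap p A)} := fun A hA => by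
    simp only [HasMinWeight, Set.mem_ofPred_eq, not_forall, not_le] at hA
    obtain ⟨w, hwA, hw0, hws⟩ := hA
    exact Set.mem_biUnion (by simpa [T] using ⟨hws.le, hw0⟩) hwA
  calc (matrixLaw ν).real {A | ¬ HasMinWeight s (LinearMap.ker (modMap p A))}
      ≤ ∑ w ∈ T, (matrixLaw ν).real {A | w ∈ LinearMap.ker (modMap p A)} :=
        (measureReal_mono hcover (measure_ne_top _ _)).trans (measureReal_biUnion_finset_le _ _)
    _ ≤ T.card * (1 - ε) ^ l := by
        rw [← nsmul_eq_mul]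
        exact Finset.sum_le_card_nsmul _ _ _ fun w hw =>
          measureReal_mem_ker_modMap_le hν (Finset.mem_filter.1 hw).2.2
    _ ≤ (m * p : ℝ) ^ s * (1 - ε) ^ l :=
        mul_le_mul_of_nonneg_right hT (pow_nonneg (sub_nonneg.2 hε) l)

end SinglePrime

section PrimeFamily

variable {ι : Type*} [Fintype ι] {p : ι → ℕ} [∀ i, Fact (p i).Prime]

/-- The integer matrices that are surjective modulo every member of the family `p`. -/
def surjectiveModSet (p : ι → ℕ) (l m : ℕ) : Set (Fin l → Fin m → ℤ) :=
  {A | ∀ i, Function.Surjective (modMap (p i) A)}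

/-- The integer matrices whose kernel modulo `p i` has minimum distance at least `s`, for
every `i`. -/
def minWeightKerSet (p : ι → ℕ) (s l m : ℕ) : Set (Fin l → Fin m → ℤ) :=
  {A | ∀ i, HasMinWeight s (LinearMap.ker (modMap (p i) A))}

lemma measureReal_compl_minWeightKerSet_le [NeZero m] {ν : Fin l → Fin m → Measure ℤ}
    [∀ i j, IsProbabilityMeasure (ν i j)] (hε : ε ≤ 1) (hν : ∀ i j, IsBalanced ε (ν i j))
    (s : ℕ) :
    (matrixLaw ν).real (minWeightKerSet p s l m)ᶜ ≤ (∑ i, (m * p i : ℝ) ^ s) * (1 - ε) ^ l := by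
  have hcompl : (minWeightKerSet p s l m)ᶜ =
      ⋃ i, {A | ¬ HasMinWeight s (LinearMap.ker (modMap (p i) A))} := by
    ext A
    simp [minWeightKerSet]
  rw [hcompl, Finset.sum_mul]
  exact (measureReal_iUnion_fintype_le _).trans
    (Finset.sum_le_sum fun i _ => measureReal_not_hasMinWeight_ker_modMap_le hε hν s)

lemma prod_one_sub_inv_pow_mem_Icc (p : ι → ℕ) (d : ℕ) :
    ∏ i, (1 - (p i : ℝ)⁻¹ ^ d) ∈ Set.Icc 0 1 := by
  have h : ∀ i, (p i : ℝ)⁻¹ ^ d ∈ Set.Icc 0 1 := fun i =>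
    ⟨by positivity, pow_le_one₀ (by positivity) (Nat.cast_inv_le_one _)⟩
  exact ⟨Finset.prod_nonneg fun i _ => sub_nonneg.2 (h i).2,
    Finset.prod_le_one (fun i _ => sub_nonneg.2 (h i).2) fun i _ => sub_le_self _ (h i).1⟩

variable {ρ : ℝ}

lemma measureReal_cons_mem_surjectiveModSet_le {ν : Fin m → Measure ℤ}
    [∀ j, IsProbabilityMeasure (ν j)] (hρ0 : 0 ≤ ρ) (hρ1 : ρ ≤ 1)
    (hρ : ∀ j, ∀ z ≠ 0, ‖∫ y, primeChar p z y ∂ν j‖ ≤ ρ) {s : ℕ} {A : Fin l → Fin m → ℤ}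
    (hA : A ∈ surjectiveModSet p l m ∩ minWeightKerSet p s l m) :
    (Measure.pi ν).real {r | (Fin.cons r A : Fin (l + 1) → _) ∈ surjectiveModSet p (l + 1) m} ≤
      ∏ i, (1 - (p i : ℝ)⁻¹ ^ (m - l)) + 2 ^ Fintype.card ι * ρ ^ s := by
  have hker := measureReal_exists_dotProduct_ne_zero_le hρ0 hρ1 hρ hA.2
  simp only [natCard_ker_modMap (hA.1 _), Nat.cast_pow, ← inv_pow] at hker
  refine (measureReal_mono ?_).trans hker
  exact fun r hr i => exists_mem_ker_modMap_dotProduct_ne_zero (hr i)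

lemma measureReal_surjectiveModSet_succ_le [NeZero m] (hε : ε ≤ 1) (hρ0 : 0 ≤ ρ) (hρ1 : ρ ≤ 1)
    {ν : Fin (l + 1) → Fin m → Measure ℤ} [∀ i j, IsProbabilityMeasure (ν i j)]
    (hν : ∀ i j, IsBalanced ε (ν i j))
    (hρ : ∀ i j, ∀ z ≠ 0, ‖∫ y, primeChar p z y ∂ν i j‖ ≤ ρ) (s : ℕ) :
    (matrixLaw ν).real (surjectiveModSet p (l + 1) m) ≤
      (∏ i, (1 - (p i : ℝ)⁻¹ ^ (m - l))) *
          (matrixLaw fun i : Fin l => ν i.succ).real (surjectiveModSet p l m) +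
        (2 ^ Fintype.card ι * ρ ^ s + (∑ i, (m * p i : ℝ) ^ s) * (1 - ε) ^ l) := by
  set c : ℝ := ∏ i, (1 - (p i : ℝ)⁻¹ ^ (m - l))
  set G := minWeightKerSet p s l m
  set S := surjectiveModSet p l m
  set S' := surjectiveModSet p (l + 1) m
  have hc : c ∈ Set.Icc 0 1 := prod_one_sub_inv_pow_mem_Icc p (m - l)
  have hgood : (matrixLaw ν).real (S' ∩ Fin.tail ⁻¹' G) ≤
      (c + 2 ^ Fintype.card ι * ρ ^ s) * (matrixLaw fun i : Fin l => ν i.succ).real (S ∩ G) := by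
    refine measureReal_pi_le_mul 0 .of_discrete .of_discrete (by have := hc.1; positivity)
      (fun A hA => ⟨fun i => surjective_modMap_tail (hA.1 i), hA.2⟩) fun A hA => ?_
    refine (measureReal_mono fun r hr => ?_).trans
      (measureReal_cons_mem_surjectiveModSet_le hρ0 hρ1 (hρ 0) hA)
    simpa [Fin.insertNth_zero'] using hr.1
  have hbad : (matrixLaw ν).real (S' ∩ Fin.tail ⁻¹' Gᶜ) ≤
      1 * (matrixLaw fun i : Fin l => ν i.succ).real Gᶜ :=
    measureReal_pi_le_mul 0 .of_discrete .of_discrete zero_le_one (fun A hA => hA.2)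
      fun _ _ => measureReal_le_one
  have hmono : (matrixLaw fun i : Fin l => ν i.succ).real (S ∩ G) ≤
      (matrixLaw fun i : Fin l => ν i.succ).real S := measureReal_mono Set.inter_subset_left
  calc (matrixLaw ν).real S'
      = (matrixLaw ν).real (S' ∩ Fin.tail ⁻¹' G) + (matrixLaw ν).real (S' ∩ Fin.tail ⁻¹' Gᶜ) :=
        (measureReal_inter_add_sdiff .of_discrete).symm
    _ ≤ (c + 2 ^ Fintype.card ι * ρ ^ s) * (matrixLaw fun i : Fin l => ν i.succ).real (S ∩ G) +
          1 * (matrixLaw fun i : Fin l => ν i.succ).real Gᶜ := add_le_add hgood hbad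
    _ ≤ c * (matrixLaw fun i : Fin l => ν i.succ).real S + 2 ^ Fintype.card ι * ρ ^ s * 1 +
          1 * ((∑ i, (m * p i : ℝ) ^ s) * (1 - ε) ^ l) := by
        rw [add_mul]
        gcongr
        · exact hc.1
        · exact measureReal_le_one
        · exact measureReal_compl_minWeightKerSet_le hε (fun i => hν i.succ) s
    _ = _ := by ring

lemma measureReal_surjectiveModSet_le_prod_add [NeZero m] (hε0 : 0 ≤ ε) (hε1 : ε ≤ 1)
    (hρ0 : 0 ≤ ρ) (hρ1 : ρ ≤ 1) (s : ℕ) (K : ℕ) {u : ℕ} (hm : l + K + u = m)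
    {ν : Fin (l + K) → Fin m → Measure ℤ} [∀ i j, IsProbabilityMeasure (ν i j)]
    (hν : ∀ i j, IsBalanced ε (ν i j))
    (hρ : ∀ i j, ∀ z ≠ 0, ‖∫ y, primeChar p z y ∂ν i j‖ ≤ ρ) :
    (matrixLaw ν).real (surjectiveModSet p (l + K) m) ≤
      ∏ k ∈ Finset.range K, ∏ i, (1 - (p i : ℝ)⁻¹ ^ (k + 1 + u)) +
        K * (2 ^ Fintype.card ι * ρ ^ s + (∑ i, (m * p i : ℝ) ^ s) * (1 - ε) ^ l) := by
  induction K generalizing u with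
  | zero => simp
  | succ K ih =>
    have hstep := measureReal_surjectiveModSet_succ_le (l := l + K) hε1 hρ0 hρ1 hν hρ s
    have hih := ih (u := u + 1) (by omega) (fun i => hν i.succ) (fun i => hρ i.succ)
    have hexp : m - (l + K) = 0 + 1 + u := by omega
    have hc := prod_one_sub_inv_pow_mem_Icc p (0 + 1 + u)
    have hpow : (1 - ε) ^ (l + K) ≤ (1 - ε) ^ l :=
      pow_le_pow_of_le_one (sub_nonneg.2 hε1) (sub_le_self _ hε0) (Nat.le_add_right l K)
    set δ : ℝ := 2 ^ Fintype.card ι * ρ ^ s + (∑ i, (m * p i : ℝ) ^ s) * (1 - ε) ^ l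
    have hδ : 0 ≤ δ := by have := sub_nonneg.2 hε1; positivity
    calc (matrixLaw ν).real (surjectiveModSet p (l + K + 1) m)
        ≤ (∏ i, (1 - (p i : ℝ)⁻¹ ^ (0 + 1 + u))) *
            (matrixLaw fun i : Fin (l + K) => ν i.succ).real (surjectiveModSet p (l + K) m) +
          δ := by
          rw [hexp] at hstep
          exact hstep.trans (by simp only [δ]; gcongr)
      _ ≤ (∏ i, (1 - (p i : ℝ)⁻¹ ^ (0 + 1 + u))) *
            ∏ k ∈ Finset.range K, ∏ i, (1 - (p i : ℝ)⁻¹ ^ (k + 1 + (u + 1))) +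
          1 * (K * δ) + δ := by
        refine add_le_add_left ((mul_le_mul_of_nonneg_left hih hc.1).trans ?_) δ
        rw [mul_add]
        gcongr
        exact hc.2
      _ = _ := by
        rw [Finset.prod_range_succ']
        push_cast
        simp only [show ∀ k, k + 1 + (u + 1) = k + 1 + 1 + u by omega]
        ring

end PrimeFamily

end Matrices

section Limsup

lemma tendsto_natCast_add_pow_mul_pow {x : ℝ} (hx0 : 0 ≤ x) (hx1 : x < 1) (c s : ℕ) :
    Tendsto (fun l : ℕ => ((l + c : ℕ) : ℝ) ^ s * x ^ l) atTop (𝓝 0) := by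
  have hlim := (tendsto_pow_const_mul_const_pow_of_lt_one s hx0 hx1).const_mul (2 ^ s)
  rw [mul_zero] at hlim
  refine squeeze_zero' (.of_forall fun l => by positivity) ?_ hlim
  filter_upwards [eventually_ge_atTop c] with l hl
  rw [← mul_assoc, ← mul_pow]
  gcongr
  exact_mod_cast (by omega : l + c ≤ 2 * l)

lemma limsup_measureReal_surjective_le_prod_add {ι : Type*} [Fintype ι] {p : ι → ℕ}
    [∀ i, Fact (p i).Prime] {ε ρ : ℝ} (hε0 : 0 < ε) (hρ0 : 0 ≤ ρ) (hρ1 : ρ ≤ 1) {u : ℕ}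
    {ν : (n : ℕ) → Fin n → Fin (n + u) → Measure ℤ} [∀ n i j, IsProbabilityMeasure (ν n i j)]
    (hν : ∀ n i j, IsBalanced ε (ν n i j))
    (hρ : ∀ n i j, ∀ z ≠ 0, ‖∫ y, primeChar p z y ∂ν n i j‖ ≤ ρ) (K s : ℕ) :
    limsup (fun n => (matrixLaw (ν n)).real
        {A | Function.Surjective (Matrix.of A).mulVecLin}) atTop ≤
      ∏ k ∈ Finset.range K, ∏ i, (1 - (p i : ℝ)⁻¹ ^ (k + 1 + u)) +
        K * (2 ^ Fintype.card ι * ρ ^ s) := by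
  have hε1 : ε ≤ 1 := (hν 1 0 0).le_one
  have hbound : ∀ᶠ l in atTop, (matrixLaw (ν (l + K))).real
      {A | Function.Surjective (Matrix.of A).mulVecLin} ≤
        ∏ k ∈ Finset.range K, ∏ i, (1 - (p i : ℝ)⁻¹ ^ (k + 1 + u)) +
          K * (2 ^ Fintype.card ι * ρ ^ s +
            (∑ i, (p i : ℝ) ^ s) * (((l + (K + u) : ℕ) : ℝ) ^ s * (1 - ε) ^ l)) := by
    filter_upwards [eventually_ge_atTop 1] with l hl
    have : NeZero (l + K + u) := ⟨by omega⟩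
    have hmod := measureReal_surjectiveModSet_le_prod_add hε0.le hε1 hρ0 hρ1 s K rfl
      (hν (l + K)) (hρ (l + K))
    refine (measureReal_mono ?_).trans (hmod.trans_eq ?_)
    · exact fun A hA i => surjective_modMap_of_surjective_mulVecLin hA
    · simp only [mul_pow, ← Finset.mul_sum, ← add_assoc]
      ring
  have hlim := ((((tendsto_natCast_add_pow_mul_pow (sub_nonneg.2 hε1) (sub_lt_self 1 hε0)
    (K + u) s).const_mul (∑ i, (p i : ℝ) ^ s)).const_add (2 ^ Fintype.card ι * ρ ^ s)).const_mul
      (K : ℝ)).const_add (∏ k ∈ Finset.range K, ∏ i, (1 - (p i : ℝ)⁻¹ ^ (k + 1 + u)))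
  rw [mul_zero, add_zero] at hlim
  rw [← limsup_nat_add _ K, ← hlim.limsup_eq]
  exact limsup_le_limsup hbound
    (isCoboundedUnder_le_of_le atTop fun _ => measureReal_nonneg) hlim.isBoundedUnder_le

lemma limsup_measureReal_surjective_le {ε : ℝ} (hε : 0 < ε) {u : ℕ}
    {ν : (n : ℕ) → Fin n → Fin (n + u) → Measure ℤ}
    [∀ n i j, IsProbabilityMeasure (ν n i j)] (hν : ∀ n i j, IsBalanced ε (ν n i j))
    (P : Finset Nat.Primes) (K : ℕ) :
    limsup (fun n => (matrixLaw (ν n)).real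
        {A | Function.Surjective (Matrix.of A).mulVecLin}) atTop ≤
      ∏ k ∈ Finset.range K, ∏ p ∈ P, (1 - ((p : ℕ) : ℝ)⁻¹ ^ (k + 1 + u)) := by
  let p : P → ℕ := fun q => q.1
  have hprime : ∀ q, Fact (p q).Prime := fun q => ⟨q.1.2⟩
  have hp : Function.Injective p := Subtype.val_injective.comp Subtype.val_injective
  obtain ⟨ρ, hρ0, hρ1, hρ⟩ := exists_forall_norm_integral_primeChar_le hp hε
  have hlim := (((tendsto_pow_atTop_nhds_zero_of_lt_one hρ0 hρ1).const_mul
    (2 ^ Fintype.card P)).const_mul (K : ℝ)).const_add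
      (∏ k ∈ Finset.range K, ∏ q, (1 - (p q : ℝ)⁻¹ ^ (k + 1 + u)))
  rw [mul_zero, mul_zero, add_zero] at hlim
  simp only [← Finset.prod_coe_sort P]
  exact ge_of_tendsto' hlim fun s => limsup_measureReal_surjective_le_prod_add hε hρ0 hρ1.le hν
    (fun n i j => hρ (ν n i j) (hν n i j)) K s

end Limsup

theorem stmt1 (ε : ℝ) (hε : 0 < ε) (u : ℕ) (hu : 1 ≤ u)
    (ν : (n : ℕ) → Fin n → Fin (n + u) → Measure ℤ)
    (hprob : ∀ n i j, IsProbabilityMeasure (ν n i j))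
    (hbal : ∀ n i j, IsBalanced ε (ν n i j)) :
    limsup (fun n : ℕ =>
        ((matrixLaw (ν n)) {A | Function.Surjective (Matrix.of A).mulVecLin}).toReal) atTop ≤
      ∏' p : Nat.Primes, ∏' k : ℕ, (1 - ((p : ℕ) : ℝ)⁻¹ ^ (k + 1 + u)) ∧
    ((∏' p : Nat.Primes, ∏' k : ℕ, (1 - ((p : ℕ) : ℝ)⁻¹ ^ (k + 1 + u)) : ℝ) : ℂ) =
      ∏' k : ℕ, (riemannZeta ((k : ℂ) + u + 1))⁻¹ :=
  ⟨le_tprod_primes_tprod hu (limsup_measureReal_surjective_le hε hbal),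
    tprod_primes_tprod_eq_tprod_inv_riemannZeta hu⟩
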